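/- Let R be a basic left Harada algebra with modules P_{ij} := rad^{j-1}(e_{i1}R) as below, and let f : P_{ij} → P_{il} be an injective homomorphism of right R-modules with j ≥ l. Then for every non-injective homomorphism g : P_{ij} → P_{st} (any 1 ≤ s ≤ m, 1 ≤ t ≤ n_s), there exists a homomorphism h : P_{il} → P_{st} such that g = h ∘ f. -/

import Mathlib

/-!
Common setup.  `K` is an algebraically closed field and `R` a finite-dimensional associative
unital `K`-algebra.  Right `R`-modules are formalized as modules over the opposite ring `Rᵐᵒᵖ`
(so that `MulOpposite.op r • x = x * r`).
-/

open MulOpposite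

/-- The right ideal `xR` of a ring `R`, as a submodule of `R` over `Rᵐᵒᵖ`. -/
def rightIdeal (R : Type) [Ring R] (x : R) : Submodule Rᵐᵒᵖ R :=
  Submodule.span Rᵐᵒᵖ {x}

/-- The Jacobson radical of a submodule `N` (the intersection of the maximal submodules of the
module `N`), viewed as a submodule of the ambient module.  Iterating this operation gives the
iterated radicals `rad^k`. -/
def radSub {A M : Type} [Ring A] [AddCommGroup M] [Module A M] (N : Submodule A M) :
    Submodule A M :=
  Submodule.map N.subtype (sInf {P : Submodule A ↥N | IsCoatom P})

/-- A module is indecomposable if it is nonzero and admits no nontrivial direct sum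
decomposition. -/
def IsIndecomposableMod (A M : Type) [Ring A] [AddCommGroup M] [Module A M] : Prop :=
  Nontrivial M ∧ ∀ N N' : Submodule A M, IsCompl N N' → N = ⊥ ∨ N' = ⊥

/-- A module has projective dimension at most one iff it admits a surjection from a projective
module with projective kernel. -/
def PdLeOne (A : Type) [Ring A] (M : Type) [AddCommGroup M] [Module A M] : Prop :=
  ∃ (P : ModuleCat.{0} A) (f : ↥P →ₗ[A] M),
    Module.Projective A ↥P ∧ Function.Surjective f ∧
      Module.Projective A ↥(LinearMap.ker f)

/-- `Ext¹_A(M,N) = 0`, expressed by the splitting of every short exact sequence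
`0 → N → E → M → 0`. -/
def Ext1Zero (A : Type) [Ring A] (M N : Type) [AddCommGroup M] [Module A M]
    [AddCommGroup N] [Module A N] : Prop :=
  ∀ (E : ModuleCat.{0} A) (i : N →ₗ[A] ↥E) (p : ↥E →ₗ[A] M),
    Function.Injective i → Function.Surjective p → LinearMap.range i = LinearMap.ker p →
    ∃ s : M →ₗ[A] ↥E, p.comp s = LinearMap.id

/-- `X ∈ add T` : `X` is a direct summand of a finite direct sum of copies of `T`. -/
def InAdd (A : Type) [Ring A] (T X : Type) [AddCommGroup T] [Module A T]
    [AddCommGroup X] [Module A X] : Prop :=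
  ∃ (k : ℕ) (f : X →ₗ[A] (Fin k → T)) (g : (Fin k → T) →ₗ[A] X),
    g.comp f = LinearMap.id

/-- `T` is a (finitely generated) tilting right `R`-module: projective dimension at most one,
no self-extensions, and there is a short exact sequence `0 → R → T₀ → T₁ → 0` with
`T₀, T₁ ∈ add T`. -/
def IsTiltingRight (R : Type) [Ring R] (T : Type) [AddCommGroup T] [Module Rᵐᵒᵖ T] : Prop :=
  Module.Finite Rᵐᵒᵖ T ∧ PdLeOne Rᵐᵒᵖ T ∧ Ext1Zero Rᵐᵒᵖ T T ∧
    ∃ (T₀ T₁ : ModuleCat.{0} Rᵐᵒᵖ) (f : R →ₗ[Rᵐᵒᵖ] ↥T₀) (g : ↥T₀ →ₗ[Rᵐᵒᵖ] ↥T₁),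
      InAdd Rᵐᵒᵖ T ↥T₀ ∧ InAdd Rᵐᵒᵖ T ↥T₁ ∧
        Function.Injective f ∧ Function.Surjective g ∧ LinearMap.range f = LinearMap.ker g

/-- `T` is basic: it is an (internal) direct sum of pairwise non-isomorphic indecomposable
submodules. -/
def IsBasicMod (A : Type) [Ring A] (T : Type) [AddCommGroup T] [Module A T] : Prop :=
  ∃ (k : ℕ) (N : Fin k → Submodule A T),
    DirectSum.IsInternal N ∧ (∀ a, IsIndecomposableMod A ↥(N a)) ∧
      ∀ a b, a ≠ b → IsEmpty (↥(N a) ≃ₗ[A] ↥(N b))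

/-- The setoid identifying isomorphic modules (among those with property `P`). -/
def isoSetoid (A : Type) [Ring A] (P : ModuleCat.{0} A → Prop) :
    Setoid {M : ModuleCat.{0} A // P M} where
  r M N := Nonempty (↥M.1 ≃ₗ[A] ↥N.1)
  iseqv := ⟨fun M => ⟨LinearEquiv.refl A ↥M.1⟩, fun ⟨e⟩ => ⟨e.symm⟩,
    fun ⟨e⟩ ⟨f⟩ => ⟨e.trans f⟩⟩

/-- The data exhibiting a ring `R` as a basic left Harada algebra:
a complete set `{e i j}` of orthogonal primitive idempotents with pairwise non-isomorphic
right ideals `(e i j)R` (`R` is basic), such that each `(e i 0)R` is an injective right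
module, and `(e i j)R ≅ rad ((e i (j-1))R)` for `j ≥ 1`.  (Indices are shifted by one from
the paper: the paper's `e_{ij}` is `e i (j-1)` here.) -/
structure HaradaData (R : Type) [Ring R] : Type where
  m : ℕ
  hm : 0 < m
  n : Fin m → ℕ
  hn : ∀ i, 0 < n i
  e : (i : Fin m) → Fin (n i) → R
  idem : ∀ i j, IsIdempotentElem (e i j)
  orth : ∀ p q : Σ i : Fin m, Fin (n i), p ≠ q → e p.1 p.2 * e q.1 q.2 = 0
  sum_eq_one : ∑ p : Σ i : Fin m, Fin (n i), e p.1 p.2 = 1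
  indec : ∀ i j, IsIndecomposableMod Rᵐᵒᵖ ↥(rightIdeal R (e i j))
  basic : ∀ p q : Σ i : Fin m, Fin (n i), p ≠ q →
    IsEmpty (↥(rightIdeal R (e p.1 p.2)) ≃ₗ[Rᵐᵒᵖ] ↥(rightIdeal R (e q.1 q.2)))
  inj : ∀ i, Module.Injective Rᵐᵒᵖ ↥(rightIdeal R (e i ⟨0, hn i⟩))
  rad_iso : ∀ (i : Fin m) (j : Fin (n i)), 0 < j.val →
    Nonempty (↥(rightIdeal R (e i j)) ≃ₗ[Rᵐᵒᵖ]
      ↥(radSub (rightIdeal R (e i ⟨j.val - 1, Nat.lt_of_le_of_lt (Nat.sub_le j.val 1) j.isLt⟩))))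

variable {R : Type} [Ring R]

/-- `H.P i j = rad^j ((e i 0)R)`; this is the paper's `P_{i,j+1} = rad^j (e_{i1}R)`,
a submodule of `R`. -/
def HaradaData.P (H : HaradaData R) (i : Fin H.m) (j : Fin (H.n i)) : Submodule Rᵐᵒᵖ R :=
  radSub^[j.val] (rightIdeal R (H.e i ⟨0, H.hn i⟩))

/-- The quotient module `P_{ik}/P_{il}` (for `l ≥ k` we have `H.P i l ≤ H.P i k`). -/
abbrev HaradaData.Quot (H : HaradaData R) (i : Fin H.m) (k l : Fin (H.n i)) : Type :=
  ↥(H.P i k) ⧸ Submodule.comap (H.P i k).subtype (H.P i l)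

/-- The last index (the paper's `n_i`) in `Fin (H.n i)`. -/
def HaradaData.last (H : HaradaData R) (i : Fin H.m) : Fin (H.n i) :=
  ⟨H.n i - 1, Nat.sub_lt (H.hn i) one_pos⟩

/-- The right ideal `I = ⊕_{i,j} rad^{n_i - j + 1}(e_{ij}R)` of the paper. -/
def HaradaData.I (H : HaradaData R) : Submodule Rᵐᵒᵖ R :=
  ⨆ p : Σ i : Fin H.m, Fin (H.n i),
    radSub^[H.n p.1 - p.2.val] (rightIdeal R (H.e p.1 p.2))

/-- The submodule `T·I` of a right module `T`, for `I` a right ideal of `R`. -/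
def smulSub (I : Submodule Rᵐᵒᵖ R) (T : Type) [AddCommGroup T] [Module Rᵐᵒᵖ T] :
    Submodule Rᵐᵒᵖ T :=
  Submodule.span Rᵐᵒᵖ {x : T | ∃ (t : T) (r : R), r ∈ I ∧ x = op r • t}

/-!
By injectivity of `P_{s1}`, the map `g : P_{ij} → P_{st} ⊆ P_{s1}` extends along `f` to some
`h : P_{il} → P_{s1}`, and `h` is not injective because `g` is not. If the image of `h` lies in
`P_{sk}`, it cannot be all of `P_{sk}`: that module is projective, so `h` would split, and would
then be injective since `P_{il}` is indecomposable. As `P_{sk}` is projective with local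
endomorphism ring, its radical contains every proper submodule, so the image of `h` lies in
`P_{s,k+1}`. Descending along the chain, it lies in `P_{st}`.
-/

section Indecomposable

variable {A M N : Type} [Ring A] [AddCommGroup M] [Module A M] [AddCommGroup N] [Module A N]

theorem IsIndecomposableMod.of_linearEquiv (hM : IsIndecomposableMod A M) (e : M ≃ₗ[A] N) :
    IsIndecomposableMod A N := by
  have := hM.1
  refine ⟨e.symm.toEquiv.nontrivial, fun C D hCD => ?_⟩
  simpa using hM.2 _ _ ((Submodule.orderIsoMapComap e.symm).isCompl hCD)

theorem IsIndecomposableMod.injective_of_surjective [Module.Projective A N] [Nontrivial N]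
    (hM : IsIndecomposableMod A M) {p : M →ₗ[A] N} (hp : Function.Surjective p) :
    Function.Injective p := by
  obtain ⟨σ, hσ⟩ := Module.projective_lifting_property p LinearMap.id hp
  have hpσ : Function.LeftInverse p σ := LinearMap.congr_fun hσ
  have hidem : IsIdempotentElem (σ ∘ₗ p) := LinearMap.ext fun x => congrArg σ (hpσ (p x))
  have hker : (σ ∘ₗ p).ker = p.ker :=
    LinearMap.ker_comp_of_ker_eq_bot p (LinearMap.ker_eq_bot.2 hpσ.injective)
  have hrange : (σ ∘ₗ p).range ≠ ⊥ := by
    obtain ⟨y, hy⟩ := exists_ne (0 : N)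
    obtain ⟨x, rfl⟩ := hp y
    intro h
    have hx : σ (p x) = 0 := LinearMap.congr_fun (LinearMap.range_eq_bot.1 h) x
    exact hy (hpσ.injective (hx.trans (map_zero σ).symm))
  rw [← LinearMap.ker_eq_bot, ← hker]
  exact (hM.2 _ _ (LinearMap.IsIdempotentElem.isCompl hidem)).resolve_left hrange

/-- Fitting's lemma. -/
theorem IsIndecomposableMod.isUnit_or_isNilpotent [IsArtinian A M] [IsNoetherian A M]
    (hM : IsIndecomposableMod A M) (a : Module.End A M) : IsUnit a ∨ IsNilpotent a := by
  obtain ⟨n, hn⟩ := Filter.eventually_atTop.1 a.eventually_isCompl_ker_pow_range_pow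
  have hcompl := hn (n + 1) n.le_succ
  rcases hM.2 _ _ hcompl with hker | hrange
  · left
    have hunit : IsUnit (a ^ (n + 1)) := by
      rw [Module.End.isUnit_iff, Function.Bijective, ← LinearMap.ker_eq_bot,
        ← LinearMap.range_eq_top]
      exact ⟨hker, by simpa only [hker, bot_sup_eq] using hcompl.sup_eq_top⟩
    exact (isUnit_pow_iff n.succ_ne_zero).1 hunit
  · exact Or.inr ⟨n + 1, LinearMap.range_eq_bot.1 hrange⟩

theorem IsIndecomposableMod.isLocalRing_end [IsArtinian A M] [IsNoetherian A M]
    (hM : IsIndecomposableMod A M) : IsLocalRing (Module.End A M) := by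
  have := hM.1
  exact IsLocalRing.of_isUnit_or_isUnit_one_sub_self fun a =>
    (hM.isUnit_or_isNilpotent a).imp_right IsNilpotent.isUnit_one_sub

end Indecomposable

section LocalProjective

variable {A M : Type*} [Ring A] [AddCommGroup M] [Module A M]

theorem eq_top_or_eq_top_of_sup_eq_top [Module.Projective A M] [IsLocalRing (Module.End A M)]
    {C D : Submodule A M} (hCD : C ⊔ D = ⊤) : C = ⊤ ∨ D = ⊤ := by
  have hsurj : Function.Surjective (C.subtype.coprod D.subtype) := by
    rw [← LinearMap.range_eq_top, LinearMap.range_coprod, C.range_subtype, D.range_subtype, hCD]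
  obtain ⟨σ, hσ⟩ := Module.projective_lifting_property _ LinearMap.id hsurj
  let a : Module.End A M := C.subtype ∘ₗ LinearMap.fst A C D ∘ₗ σ
  let b : Module.End A M := D.subtype ∘ₗ LinearMap.snd A C D ∘ₗ σ
  have hab : a + b = 1 := LinearMap.ext (LinearMap.congr_fun hσ)
  have eq_top_of_isUnit {c : Module.End A M} {E : Submodule A M} (hc : IsUnit c)
      (hcE : ∀ x, c x ∈ E) : E = ⊤ := by
    refine eq_top_iff.2 fun y _ => ?_
    obtain ⟨x, rfl⟩ := ((Module.End.isUnit_iff c).1 hc).2 y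
    exact hcE x
  exact (IsLocalRing.isUnit_or_isUnit_of_add_one hab).imp
    (eq_top_of_isUnit · fun x => (σ x).1.2) (eq_top_of_isUnit · fun x => (σ x).2.2)

theorem le_jacobson_of_ne_top [Module.Projective A M] [IsLocalRing (Module.End A M)]
    {Q : Submodule A M} (hQ : Q ≠ ⊤) : Q ≤ Module.jacobson A M := by
  refine le_sInf fun C hC => ?_
  by_contra hQC
  have hsup : Q ⊔ C = ⊤ := hC.2 _ (right_lt_sup.2 hQC)
  exact (eq_top_or_eq_top_of_sup_eq_top hsup).elim hQ hC.1

end LocalProjective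

section Radical

variable {A M M' : Type} [Ring A] [AddCommGroup M] [Module A M] [AddCommGroup M'] [Module A M']

theorem radSub_le (N : Submodule A M) : radSub N ≤ N :=
  Submodule.map_subtype_le _ _

theorem nonempty_radSub_equiv {N : Submodule A M} {N' : Submodule A M'} (e : N ≃ₗ[A] N') :
    Nonempty (radSub N ≃ₗ[A] radSub N') := by
  have hmap : (Module.jacobson A N).map (e : N →ₗ[A] N') = Module.jacobson A N' :=
    Module.map_jacobson_of_bijective e.bijective
  exact ⟨(N.equivSubtypeMap (Module.jacobson A N)).symm ≪≫ₗ e.submoduleMap (Module.jacobson A N) ≪≫ₗ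
    LinearEquiv.ofEq _ _ hmap ≪≫ₗ N'.equivSubtypeMap (Module.jacobson A N')⟩

theorem le_radSub_of_lt {N Q : Submodule A M} [Module.Projective A N]
    [IsLocalRing (Module.End A N)] (hQN : Q < N) : Q ≤ radSub N := by
  have hQ : Q.submoduleOf N ≠ ⊤ := fun h => hQN.not_ge (Submodule.submoduleOf_eq_top.1 h)
  exact fun x hx => ⟨⟨x, hQN.le hx⟩, le_jacobson_of_ne_top hQ hx, rfl⟩

theorem IsIndecomposableMod.range_le_radSub {N : Submodule A M'} [Module.Projective A N]
    [IsLocalRing (Module.End A N)] (hM : IsIndecomposableMod A M)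
    {h : M →ₗ[A] M'} (hh : ¬ Function.Injective h) (hN : h.range ≤ N) : h.range ≤ radSub N := by
  have : Nontrivial N :=
    not_subsingleton_iff_nontrivial.1 fun _ => not_subsingleton (Module.End A N) inferInstance
  refine le_radSub_of_lt (hN.lt_of_ne ?_)
  rintro rfl
  have hinj := hM.injective_of_surjective h.surjective_rangeRestrict
  exact hh (Subtype.val_injective.comp hinj)

end Radical

theorem finite_rightIdeal (x : R) : Module.Finite Rᵐᵒᵖ (rightIdeal R x) :=
  Module.Finite.span_singleton Rᵐᵒᵖ x

theorem projective_rightIdeal {x : R} (hx : IsIdempotentElem x) :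
    Module.Projective Rᵐᵒᵖ (rightIdeal R x) := by
  have : Module.Projective Rᵐᵒᵖ R := .of_equiv (opLinearEquiv Rᵐᵒᵖ (M := R)).symm
  let p : R →ₗ[Rᵐᵒᵖ] rightIdeal R x :=
    (LinearMap.mulLeft Rᵐᵒᵖ x).codRestrict _ fun y =>
      Submodule.mem_span_singleton.2 ⟨op y, rfl⟩
  refine .of_split (rightIdeal R x).subtype p ?_
  ext ⟨y, hy⟩
  obtain ⟨r, rfl⟩ := Submodule.mem_span_singleton.1 hy
  change x * (x * r.unop) = x * r.unop
  rw [← mul_assoc, hx.eq]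

namespace HaradaData

variable (H : HaradaData R) (i : Fin H.m)

theorem P_succ (k : ℕ) (hk : k + 1 < H.n i) :
    H.P i ⟨k + 1, hk⟩ = radSub (H.P i ⟨k, Nat.lt_of_succ_lt hk⟩) :=
  Function.iterate_succ_apply' _ _ _

theorem P_le_P_zero (j : Fin (H.n i)) : H.P i j ≤ H.P i ⟨0, H.hn i⟩ := by
  obtain ⟨k, hk⟩ := j
  induction k with
  | zero => exact le_rfl
  | succ k ih => exact (H.P_succ i k hk).trans_le ((radSub_le _).trans (ih _))

theorem nonempty_rightIdeal_equiv_P (j : Fin (H.n i)) :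
    Nonempty (rightIdeal R (H.e i j) ≃ₗ[Rᵐᵒᵖ] H.P i j) := by
  obtain ⟨k, hk⟩ := j
  induction k with
  | zero => exact ⟨.refl _ _⟩
  | succ k ih =>
    obtain ⟨eRad⟩ := H.rad_iso i ⟨k + 1, hk⟩ k.succ_pos
    obtain ⟨ePrev⟩ := ih (Nat.lt_of_succ_lt hk)
    obtain ⟨eRadPrev⟩ := nonempty_radSub_equiv ePrev
    exact ⟨eRad ≪≫ₗ eRadPrev ≪≫ₗ .ofEq _ _ (H.P_succ i k hk).symm⟩

variable (j : Fin (H.n i))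

theorem isIndecomposableMod_P : IsIndecomposableMod Rᵐᵒᵖ (H.P i j) :=
  (H.indec i j).of_linearEquiv (H.nonempty_rightIdeal_equiv_P i j).some

instance projective_P : Module.Projective Rᵐᵒᵖ (H.P i j) :=
  have := projective_rightIdeal (H.idem i j)
  .of_equiv (H.nonempty_rightIdeal_equiv_P i j).some

instance finite_P : Module.Finite Rᵐᵒᵖ (H.P i j) :=
  have := finite_rightIdeal (H.e i j)
  .equiv (H.nonempty_rightIdeal_equiv_P i j).some

instance isLocalRing_end_P [IsArtinianRing Rᵐᵒᵖ] : IsLocalRing (Module.End Rᵐᵒᵖ (H.P i j)) :=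
  (H.isIndecomposableMod_P i j).isLocalRing_end

theorem range_le_P [IsArtinianRing Rᵐᵒᵖ] {Y : Type} [AddCommGroup Y] [Module Rᵐᵒᵖ Y]
    (hY : IsIndecomposableMod Rᵐᵒᵖ Y) {h : Y →ₗ[Rᵐᵒᵖ] R} (hh : ¬ Function.Injective h)
    (hzero : h.range ≤ H.P i ⟨0, H.hn i⟩) : h.range ≤ H.P i j := by
  obtain ⟨k, hk⟩ := j
  induction k with
  | zero => exact hzero
  | succ k ih => exact (hY.range_le_radSub hh (ih _)).trans_eq (H.P_succ i k hk).symm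

end HaradaData

theorem statement6_general [IsArtinianRing Rᵐᵒᵖ] (H : HaradaData R) {X Y : Type}
    [AddCommGroup X] [Module Rᵐᵒᵖ X] [AddCommGroup Y] [Module Rᵐᵒᵖ Y]
    (hY : IsIndecomposableMod Rᵐᵒᵖ Y) {f : X →ₗ[Rᵐᵒᵖ] Y} (hf : Function.Injective f)
    (s : Fin H.m) (t : Fin (H.n s)) {g : X →ₗ[Rᵐᵒᵖ] H.P s t} (hg : ¬ Function.Injective g) :
    ∃ h : Y →ₗ[Rᵐᵒᵖ] H.P s t, g = h.comp f := by
  have hinj : Module.Injective Rᵐᵒᵖ (H.P s ⟨0, H.hn s⟩) := H.inj s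
  obtain ⟨h₀, hh₀⟩ := hinj.out f hf (Submodule.inclusion (H.P_le_P_zero s t) ∘ₗ g)
  let h : Y →ₗ[Rᵐᵒᵖ] R := (H.P s ⟨0, H.hn s⟩).subtype ∘ₗ h₀
  have hhf (x : X) : h (f x) = g x := congrArg Subtype.val (hh₀ x)
  have hh : ¬ Function.Injective h := fun h_injective =>
    hg fun x y hxy => hf (h_injective (by rw [hhf, hhf, hxy]))
  have hzero : h.range ≤ H.P s ⟨0, H.hn s⟩ := by
    rintro _ ⟨y, rfl⟩
    exact (h₀ y).2
  have hrange : h.range ≤ H.P s t := H.range_le_P s t hY hh hzero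
  exact ⟨h.codRestrict _ fun y => hrange ⟨y, rfl⟩,
    LinearMap.ext fun x => Subtype.ext (hhf x).symm⟩

/-- Lemma 2.3(2).  Let `f : P_{ij} → P_{il}` be injective, `j ≥ l`.  Every
non-injective `g : P_{ij} → P_{st}` factors as `g = h ∘ f`. -/
theorem statement6 (K R : Type) [Field K] [IsAlgClosed K] [Ring R] [Algebra K R]
    [FiniteDimensional K R] (H : HaradaData R) (i : Fin H.m) (j l : Fin (H.n i))
    (f : ↥(H.P i j) →ₗ[Rᵐᵒᵖ] ↥(H.P i l)) (hf : Function.Injective f) (hjl : l ≤ j)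
    (s : Fin H.m) (t : Fin (H.n s))
    (g : ↥(H.P i j) →ₗ[Rᵐᵒᵖ] ↥(H.P s t)) (hg : ¬ Function.Injective g) :
    ∃ h : ↥(H.P i l) →ₗ[Rᵐᵒᵖ] ↥(H.P s t), g = h.comp f := by
  have : IsArtinianRing Rᵐᵒᵖ := .of_finite K Rᵐᵒᵖ
  exact statement6_general H (H.isIndecomposableMod_P i l) hf s t hg
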